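/- Let k be a natural number and R > 0. There exists a constant K > 0 (depending only on k and R) such that for every real c > 0, every n ∈ ℤ, and all C^k functions f, g : ℝ → ℝ that are 2π-periodic with ‖f‖_{H^k} ≤ R and ‖g‖_{H^k} ≤ R, the function h(θ) = c·cos(n(θ + f(θ))) − c·cos(n(θ + g(θ))) satisfies ‖h‖_{H^k} ≤ K · c · (1 + |n|)^{k+1} · ‖f − g‖_{H^k}, where ‖h‖_{H^k}² = ∫₀^{2π} h(θ)² dθ + ∫₀^{2π} (h^{(k)}(θ))² dθ. -/

import Mathlib

/-!
Write `F = id + f`, `G = id + g`, `φ(y) = cos (n y)`, `u = f - g` and `N = 1 + |n|`.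

By Faà di Bruno, `(φ ∘ F)^(k)` is a sum over partitions `p` of `{1, …, k}` of
`φ^(|p|)(F) ∏ F^(sizes of the parts)`. Only the one-block partition involves the top derivative
`F^(k)`, and it does so linearly; every other factor has order `< k`. Since
`|φ^(l)| ≤ N^l`, the mean value theorem and telescoping the products give the pointwise bound
`|(φ ∘ F)^(k) - (φ ∘ G)^(k)| ≤ M N^(k+1) (δ (1 + |F^(k)|) + |u^(k)|)`
(`abs_iteratedDeriv_comp_sub_le`), where `δ` bounds `|u^(j)|` for `j < k`, and `M` depends only on
`k` and on a bound for the derivatives of `F` and `G` of orders `1, …, k - 1`.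

Both of these bounds come from the one-dimensional Sobolev inequality
`sup |v^(j)|² ≤ (2π)^(2k) ‖v‖²_{H^k}` for periodic `v` and `j < k`
(`sq_iteratedDeriv_le_HkNormSq`): for `j ≥ 1` the function `v^(j)` vanishes somewhere by Rolle, so
Cauchy–Schwarz bounds it by the `L²` norm of `v^(j+1)`, and this is iterated up to order `k`; for
`j = 0` the pointwise bound on `v(x) - v(y)` is averaged over `y`. Squaring and integrating the
pointwise bound finishes the proof when `k ≥ 1`. The zeroth-order part, and with it the case
`k = 0`, follows from `|cos a - cos b| ≤ |a - b|`.
-/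

/-- The squared `H^k` norm of a (`2π`-periodic) function:
`‖h‖²_{H^k} = ∫₀^{2π} h² + ∫₀^{2π} (h^{(k)})²`. -/
noncomputable def HkNormSq (k : ℕ) (h : ℝ → ℝ) : ℝ :=
  (∫ θ in (0:ℝ)..(2 * Real.pi), (h θ) ^ 2) +
    ∫ θ in (0:ℝ)..(2 * Real.pi), (iteratedDeriv k h θ) ^ 2

/-! ### Faà di Bruno terms and their differences -/

lemma sum_partSize {k : ℕ} (c : OrderedFinpartition k) : ∑ i, c.partSize i = k := by
  simpa using Fintype.card_congr c.equivSigma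

/-- Apart from the one-block partition, every part of a partition of `k` elements has fewer than
`k` elements. -/
lemma partSize_lt {k : ℕ} (c : OrderedFinpartition k) (hc : c.length ≠ 1) (i : Fin c.length) :
    c.partSize i < k := by
  have : Nontrivial (Fin c.length) := Fin.nontrivial_iff_two_le.2 (by have := i.pos; omega)
  obtain ⟨j, hj⟩ := exists_ne i
  have h := Finset.add_le_sum (f := c.partSize) (fun _ _ => Nat.zero_le _)
    (Finset.mem_univ i) (Finset.mem_univ j) hj.symm
  have := c.partSize_pos j
  have := sum_partSize c
  omega

lemma abs_prod_sub_prod_le {ι : Type*} (s : Finset ι) (a b : ι → ℝ) {B δ : ℝ} (hB : 1 ≤ B)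
    (ha : ∀ i ∈ s, |a i| ≤ B) (hb : ∀ i ∈ s, |b i| ≤ B) (hd : ∀ i ∈ s, |a i - b i| ≤ δ) :
    |∏ i ∈ s, a i - ∏ i ∈ s, b i| ≤ s.card * B ^ s.card * δ := by
  classical
  induction s using Finset.induction_on with
  | empty => simp
  | insert i s hi ih =>
    have ih' := ih (fun j hj => ha j (Finset.mem_insert_of_mem hj))
      (fun j hj => hb j (Finset.mem_insert_of_mem hj))
      (fun j hj => hd j (Finset.mem_insert_of_mem hj))
    have h1 := ha i (Finset.mem_insert_self i s)
    have h3 := hd i (Finset.mem_insert_self i s)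
    have hδ : 0 ≤ δ := (abs_nonneg _).trans h3
    have hp : |∏ j ∈ s, b j| ≤ B ^ s.card := by
      rw [Finset.abs_prod]
      simpa using Finset.prod_le_prod (fun j _ => abs_nonneg (b j))
        (fun j hj => hb j (Finset.mem_insert_of_mem hj))
    rw [Finset.prod_insert hi, Finset.prod_insert hi, Finset.card_insert_of_notMem hi]
    have e : a i * ∏ j ∈ s, a j - b i * ∏ j ∈ s, b j
        = a i * (∏ j ∈ s, a j - ∏ j ∈ s, b j) + (a i - b i) * ∏ j ∈ s, b j := by ring
    rw [e]
    have h4 : |a i * (∏ j ∈ s, a j - ∏ j ∈ s, b j)| ≤ B * (s.card * B ^ s.card * δ) := by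
      rw [abs_mul]; gcongr
    have h5 : |(a i - b i) * ∏ j ∈ s, b j| ≤ δ * (B * B ^ s.card) := by
      rw [abs_mul]
      have : B ^ s.card ≤ B * B ^ s.card := le_mul_of_one_le_left (by positivity) hB
      gcongr
      exact hp.trans this
    refine (abs_add_le _ _).trans ((add_le_add h4 h5).trans (le_of_eq ?_))
    push_cast
    ring

/-- Pointwise Lipschitz estimate for the `k`-th derivative of a composition. The top-order
derivatives of `F` and `G` enter only linearly, so they need no pointwise bound. -/
lemma abs_iteratedDeriv_comp_sub_le {k : ℕ} (hk : 1 ≤ k) {φ F G : ℝ → ℝ} {N B δ x : ℝ}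
    (hN : 1 ≤ N) (hB : 1 ≤ B) (hφ : ContDiff ℝ ⊤ φ)
    (hφb : ∀ l y, |iteratedDeriv l φ y| ≤ N ^ l)
    (hF : ContDiff ℝ k F) (hG : ContDiff ℝ k G)
    (hFb : ∀ j, 1 ≤ j → j < k → |iteratedDeriv j F x| ≤ B)
    (hGb : ∀ j, 1 ≤ j → j < k → |iteratedDeriv j G x| ≤ B)
    (hd : ∀ j < k, |iteratedDeriv j F x - iteratedDeriv j G x| ≤ δ) :
    |iteratedDeriv k (φ ∘ F) x - iteratedDeriv k (φ ∘ G) x| ≤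
      Fintype.card (OrderedFinpartition k) * ((k + 1) * B ^ k) * N ^ (k + 1) *
        (δ * (1 + |iteratedDeriv k F x|) + |iteratedDeriv k F x - iteratedDeriv k G x|) := by
  have hφk : ContDiff ℝ k φ := hφ.of_le (by exact_mod_cast le_top)
  rw [iteratedDeriv_comp_eq_sum_orderedFinpartition hφk.contDiffAt hF.contDiffAt le_rfl,
    iteratedDeriv_comp_eq_sum_orderedFinpartition hφk.contDiffAt hG.contDiffAt le_rfl,
    ← Finset.sum_sub_distrib]
  have hδ : 0 ≤ δ := (abs_nonneg _).trans (hd 0 hk)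
  set A := |iteratedDeriv k F x| with hA
  set U := |iteratedDeriv k F x - iteratedDeriv k G x| with hU
  have hA0 : 0 ≤ A := abs_nonneg _
  have hU0 : 0 ≤ U := abs_nonneg _
  have hBk : 1 ≤ B ^ k := one_le_pow₀ hB
  have hk1 : (1 : ℝ) ≤ k := by exact_mod_cast hk
  refine (Finset.abs_sum_le_sum_abs _ _).trans ((Finset.sum_le_card_nsmul _ _
    ((k + 1) * B ^ k * N ^ (k + 1) * (δ * (1 + A) + U)) ?_).trans (le_of_eq ?_))
  swap
  · rw [nsmul_eq_mul, Finset.card_univ]; ring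
  intro c _
  have hlip : |iteratedDeriv c.length φ (F x) - iteratedDeriv c.length φ (G x)|
      ≤ N ^ (k + 1) * δ := by
    have hdiff : Differentiable ℝ (iteratedDeriv c.length φ) :=
      hφ.differentiable_iteratedDeriv c.length (by exact_mod_cast WithTop.coe_lt_top _)
    have := Convex.norm_image_sub_le_of_norm_deriv_le (f := iteratedDeriv c.length φ)
      (C := N ^ (c.length + 1)) (s := Set.univ) (x := G x) (y := F x)
      (fun y _ => hdiff y) (fun y _ => by
        rw [← iteratedDeriv_succ]; exact hφb _ _) convex_univ trivial trivial
    rw [Real.norm_eq_abs, Real.norm_eq_abs] at this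
    refine this.trans ?_
    have h0 := hd 0 hk
    simp only [iteratedDeriv_zero] at h0
    have := c.length_le
    gcongr
  have hval : |iteratedDeriv c.length φ (G x)| ≤ N ^ (k + 1) := (hφb _ _).trans
    (pow_le_pow_right₀ hN (by have := c.length_le; omega))
  have hprod : |∏ i, iteratedDeriv (c.partSize i) F x| ≤ B ^ k * (1 + A) ∧
      |∏ i, iteratedDeriv (c.partSize i) F x - ∏ i, iteratedDeriv (c.partSize i) G x|
        ≤ k * B ^ k * (δ + U) := by
    by_cases hc : c.length = 1
    · have : Unique (Fin c.length) := by rw [hc]; infer_instance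
      have hs := sum_partSize c
      rw [Fintype.sum_unique] at hs
      rw [Fintype.prod_unique, Fintype.prod_unique, hs, ← hA, ← hU]
      have : 1 ≤ k * B ^ k := one_le_mul_of_one_le_of_one_le hk1 hBk
      constructor <;> nlinarith
    · have h1 : ∀ i, |iteratedDeriv (c.partSize i) F x| ≤ B := fun i =>
        hFb _ (c.partSize_pos i) (partSize_lt c hc i)
      have h2 : ∀ i, |iteratedDeriv (c.partSize i) G x| ≤ B := fun i =>
        hGb _ (c.partSize_pos i) (partSize_lt c hc i)
      have hpow : B ^ c.length ≤ B ^ k := pow_le_pow_right₀ hB c.length_le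
      have hl : (c.length : ℝ) ≤ k := by exact_mod_cast c.length_le
      constructor
      · rw [Finset.abs_prod]
        have := Finset.prod_le_prod (s := Finset.univ)
          (fun i _ => abs_nonneg (iteratedDeriv (c.partSize i) F x)) (fun i _ => h1 i)
        rw [Finset.prod_const, Finset.card_univ, Fintype.card_fin] at this
        nlinarith
      · have := abs_prod_sub_prod_le Finset.univ (fun i => iteratedDeriv (c.partSize i) F x)
          (fun i => iteratedDeriv (c.partSize i) G x) hB (fun i _ => h1 i) (fun i _ => h2 i)
          (fun i _ => hd _ (partSize_lt c hc i))
        rw [Finset.card_univ, Fintype.card_fin] at this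
        refine this.trans ?_
        gcongr
        linarith
  set P := ∏ i, iteratedDeriv (c.partSize i) F x
  set Q := ∏ i, iteratedDeriv (c.partSize i) G x
  have e : iteratedDeriv c.length φ (F x) * P - iteratedDeriv c.length φ (G x) * Q
      = (iteratedDeriv c.length φ (F x) - iteratedDeriv c.length φ (G x)) * P
        + iteratedDeriv c.length φ (G x) * (P - Q) := by ring
  calc _ ≤ (N ^ (k + 1) * δ) * (B ^ k * (1 + A)) + N ^ (k + 1) * (k * B ^ k * (δ + U)) := by
        rw [e]
        refine (abs_add_le _ _).trans (add_le_add ?_ ?_)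
        · rw [abs_mul]; gcongr; exact hprod.1
        · rw [abs_mul]; gcongr; exact hprod.2
    _ = N ^ (k + 1) * B ^ k * (δ * (1 + A) + k * (δ + U)) := by ring
    _ ≤ N ^ (k + 1) * B ^ k * ((k + 1) * (δ * (1 + A) + U)) := by
        gcongr
        nlinarith [mul_nonneg hδ hA0, mul_nonneg (mul_nonneg hδ hA0) (zero_le_one.trans hk1)]
    _ = _ := by ring

lemma abs_iteratedDeriv_cos_sin_le (l : ℕ) :
    ∀ y, |iteratedDeriv l Real.cos y| ≤ 1 ∧ |iteratedDeriv l Real.sin y| ≤ 1 := by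
  induction l with
  | zero =>
    exact fun y => ⟨by simpa using Real.abs_cos_le_one y, by simpa using Real.abs_sin_le_one y⟩
  | succ l ih =>
    intro y
    rw [Real.iteratedDeriv_add_one_cos, Real.iteratedDeriv_add_one_sin]
    exact ⟨by simpa using (ih y).2, (ih y).1⟩

lemma abs_iteratedDeriv_cos_mul_le (n : ℝ) (l : ℕ) (y : ℝ) :
    |iteratedDeriv l (fun y => Real.cos (n * y)) y| ≤ (1 + |n|) ^ l := by
  rw [iteratedDeriv_comp_const_mul Real.contDiff_cos]
  simp only [abs_mul, abs_pow]
  have h1 := (abs_iteratedDeriv_cos_sin_le l (n * y)).1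
  have h2 : |n| ^ l ≤ (1 + |n|) ^ l := by gcongr; linarith
  calc _ ≤ |n| ^ l * 1 := by gcongr
    _ ≤ _ := by simpa using h2

open Real

/-! ### A Sobolev inequality for periodic functions -/

/-- Cauchy–Schwarz against the constant function `1`, on a subinterval of `[0, 2π]`. -/
lemma sq_integral_le {w : ℝ → ℝ} (hw : Continuous w) {a b : ℝ} (ha : 0 ≤ a) (hab : a ≤ b)
    (hb : b ≤ 2 * π) : (∫ t in a..b, w t) ^ 2 ≤ 2 * π * ∫ t in (0:ℝ)..(2 * π), w t ^ 2 := by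
  have hmono : ∫ t in a..b, w t ^ 2 ≤ ∫ t in (0:ℝ)..(2 * π), w t ^ 2 :=
    intervalIntegral.integral_mono_interval ha hab hb
      (Filter.Eventually.of_forall fun _ => sq_nonneg _)
      ((hw.pow 2).intervalIntegrable _ _)
  have h0 : 0 ≤ ∫ t in a..b, w t ^ 2 :=
    intervalIntegral.integral_nonneg hab fun _ _ => sq_nonneg _
  rcases hab.eq_or_lt with rfl | hlt
  · simp only [intervalIntegral.integral_same] at hmono ⊢
    have := mul_nonneg Real.two_pi_pos.le hmono
    simpa using this
  set I := ∫ t in a..b, w t with hI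
  -- Cauchy–Schwarz as nonnegativity of the variance of `w`, scaled by `b - a`.
  have hvar : 0 ≤ ∫ t in a..b, ((b - a) * w t - I) ^ 2 :=
    intervalIntegral.integral_nonneg hab fun _ _ => sq_nonneg _
  have e : ∫ t in a..b, ((b - a) * w t - I) ^ 2
      = (b - a) * ((b - a) * (∫ t in a..b, w t ^ 2) - I ^ 2) := by
    have : ∀ t, ((b - a) * w t - I) ^ 2
        = ((b - a) ^ 2 * w t ^ 2 - (2 * (b - a) * I) * w t) + I ^ 2 := fun t => by ring
    simp_rw [this]
    rw [intervalIntegral.integral_add, intervalIntegral.integral_sub,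
      intervalIntegral.integral_const_mul, intervalIntegral.integral_const_mul,
      intervalIntegral.integral_const, ← hI, smul_eq_mul]
    · ring
    all_goals exact Continuous.intervalIntegrable (by fun_prop) _ _
  rw [e] at hvar
  have h1 := nonneg_of_mul_nonneg_right hvar (sub_pos.2 hlt)
  have : (b - a) * (∫ t in a..b, w t ^ 2) ≤ 2 * π * ∫ t in (0:ℝ)..(2 * π), w t ^ 2 := by
    have := Real.pi_pos
    gcongr
    linarith
  linarith

lemma sq_sub_le {w : ℝ → ℝ} (hw : ContDiff ℝ 1 w) {x y : ℝ} (hx : x ∈ Set.Icc 0 (2 * π))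
    (hy : y ∈ Set.Icc 0 (2 * π)) :
    (w x - w y) ^ 2 ≤ 2 * π * ∫ t in (0:ℝ)..(2 * π), deriv w t ^ 2 := by
  have hc : Continuous (deriv w) := hw.continuous_deriv le_rfl
  wlog h : y ≤ x generalizing x y
  · rw [← neg_sq, neg_sub]
    exact this hy hx (le_of_not_ge h)
  rw [← intervalIntegral.integral_deriv_eq_sub (fun t _ => hw.differentiable one_ne_zero t)
    (hc.intervalIntegrable _ _)]
  exact sq_integral_le hc hy.1 h hx.2

lemma iteratedDeriv_periodic {u : ℝ → ℝ} (hu : ∀ x, u (x + 2 * π) = u x) (j : ℕ) (x : ℝ) :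
    iteratedDeriv j u (x + 2 * π) = iteratedDeriv j u x := by
  have h := congrFun (iteratedDeriv_comp_add_const j u (2 * π)) x
  rw [show (fun z => u (z + 2 * π)) = u from funext hu] at h
  exact h.symm

lemma contDiff_one_iteratedDeriv {k j : ℕ} {u : ℝ → ℝ} (hu : ContDiff ℝ k u) (hj : j < k) :
    ContDiff ℝ 1 (iteratedDeriv j u) := by
  rw [iteratedDeriv_eq_iterate]
  exact ContDiff.iterate_deriv' 1 j (hu.of_le (by exact_mod_cast (by omega : 1 + j ≤ k)))

/-- Derivatives of order `j ≥ 1` of a periodic function vanish somewhere, by Rolle, so they are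
controlled by the next derivative alone. -/
lemma sq_iteratedDeriv_le {k j : ℕ} {u : ℝ → ℝ} (hu : ContDiff ℝ k u)
    (hper : ∀ x, u (x + 2 * π) = u x) (hj1 : 1 ≤ j) (hj : j < k) {x : ℝ}
    (hx : x ∈ Set.Icc 0 (2 * π)) :
    iteratedDeriv j u x ^ 2 ≤ 2 * π * ∫ t in (0:ℝ)..(2 * π), iteratedDeriv (j + 1) u t ^ 2 := by
  obtain ⟨i, rfl⟩ : ∃ i, j = i + 1 := ⟨j - 1, by omega⟩
  have hi := contDiff_one_iteratedDeriv hu (show i < k by omega)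
  obtain ⟨y, hy, hy0⟩ := exists_deriv_eq_zero (f := iteratedDeriv i u) Real.two_pi_pos
    hi.continuous.continuousOn (by simpa using (iteratedDeriv_periodic hper i 0).symm)
  rw [← iteratedDeriv_succ] at hy0
  have h := sq_sub_le (contDiff_one_iteratedDeriv hu hj) hx (Set.Ioo_subset_Icc_self hy)
  rwa [hy0, sub_zero, ← iteratedDeriv_succ] at h

/-- Iterated Poincaré inequality between the derivatives of orders `j ≥ 1` and `k = j + d`. -/
lemma integral_sq_iteratedDeriv_le {k : ℕ} {u : ℝ → ℝ} (hu : ContDiff ℝ k u)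
    (hper : ∀ x, u (x + 2 * π) = u x) (d : ℕ) : ∀ j, 1 ≤ j → j + d = k →
    ∫ t in (0:ℝ)..(2 * π), iteratedDeriv j u t ^ 2 ≤
      (2 * π) ^ (2 * d) * ∫ t in (0:ℝ)..(2 * π), iteratedDeriv k u t ^ 2 := by
  induction d with
  | zero => rintro j - rfl; simp
  | succ d ih =>
    intro j hj hjd
    have h1 := ih (j + 1) (by omega) (by omega)
    have hc := (contDiff_one_iteratedDeriv hu (show j < k by omega)).continuous
    have h2 := intervalIntegral.integral_mono_on (μ := MeasureTheory.volume)
      Real.two_pi_pos.le ((hc.pow 2).intervalIntegrable 0 (2 * π))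
      (Continuous.intervalIntegrable continuous_const 0 (2 * π))
      (fun x hx => sq_iteratedDeriv_le hu hper hj (show j < k by omega) hx)
    rw [intervalIntegral.integral_const, smul_eq_mul, sub_zero] at h2
    refine h2.trans ?_
    calc _ = (2 * π) ^ 2 * ∫ t in (0:ℝ)..(2 * π), iteratedDeriv (j + 1) u t ^ 2 := by ring
      _ ≤ (2 * π) ^ 2 * ((2 * π) ^ (2 * d) * ∫ t in (0:ℝ)..(2 * π), iteratedDeriv k u t ^ 2) := by
        gcongr
      _ = _ := by ring

/-- Sobolev embedding `H^k ⊂ C^(k-1)` on the circle, with an explicit constant. -/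
lemma sq_iteratedDeriv_le_HkNormSq {k j : ℕ} {u : ℝ → ℝ} (hu : ContDiff ℝ k u)
    (hper : ∀ x, u (x + 2 * π) = u x) (hj : j < k) {x : ℝ} (hx : x ∈ Set.Icc 0 (2 * π)) :
    iteratedDeriv j u x ^ 2 ≤ (2 * π) ^ (2 * k) * HkNormSq k u := by
  have hp := Real.pi_gt_three
  have h1 : (1 : ℝ) ≤ 2 * π := by linarith
  have hn0 : 0 ≤ ∫ t in (0:ℝ)..(2 * π), u t ^ 2 :=
    intervalIntegral.integral_nonneg Real.two_pi_pos.le fun _ _ => sq_nonneg _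
  have hnk : 0 ≤ ∫ t in (0:ℝ)..(2 * π), iteratedDeriv k u t ^ 2 :=
    intervalIntegral.integral_nonneg Real.two_pi_pos.le fun _ _ => sq_nonneg _
  have hI := integral_sq_iteratedDeriv_le hu hper (k - (j + 1)) (j + 1) (by omega) (by omega)
  have hpow : (2 * π) ^ 2 * (2 * π) ^ (2 * (k - (j + 1))) ≤ (2 * π) ^ (2 * k) := by
    rw [← pow_add]; exact pow_le_pow_right₀ h1 (by omega)
  have hI2 : (2 * π) ^ 2 * ∫ t in (0:ℝ)..(2 * π), iteratedDeriv (j + 1) u t ^ 2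
      ≤ (2 * π) ^ (2 * k) * ∫ t in (0:ℝ)..(2 * π), iteratedDeriv k u t ^ 2 := by
    calc _ ≤ (2 * π) ^ 2 * ((2 * π) ^ (2 * (k - (j + 1))) *
          ∫ t in (0:ℝ)..(2 * π), iteratedDeriv k u t ^ 2) := by gcongr
      _ = (2 * π) ^ 2 * (2 * π) ^ (2 * (k - (j + 1))) *
          ∫ t in (0:ℝ)..(2 * π), iteratedDeriv k u t ^ 2 := by ring
      _ ≤ _ := by gcongr
  have hj0 : 0 ≤ ∫ t in (0:ℝ)..(2 * π), iteratedDeriv (j + 1) u t ^ 2 :=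
    intervalIntegral.integral_nonneg Real.two_pi_pos.le fun _ _ => sq_nonneg _
  have hC : (1 : ℝ) ≤ (2 * π) ^ (2 * k) := one_le_pow₀ h1
  unfold HkNormSq
  rcases Nat.eq_zero_or_pos j with rfl | hj1
  · have hw : ContDiff ℝ 1 u := by simpa using contDiff_one_iteratedDeriv hu hj
    -- Average over `y` the inequality `u(x)² ≤ 2 u(y)² + 2 (u(x) - u(y))²`.
    have hav := intervalIntegral.integral_mono_on (μ := MeasureTheory.volume)
      Real.two_pi_pos.le (Continuous.intervalIntegrable
        (continuous_const (y := u x ^ 2)) 0 (2 * π))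
      (g := fun y => 2 * u y ^ 2 + 2 * (2 * π * ∫ t in (0:ℝ)..(2 * π), deriv u t ^ 2))
      (Continuous.intervalIntegrable (by have := hw.continuous; fun_prop) 0 (2 * π))
      (fun y hy => by
        have := sq_sub_le hw hx hy
        nlinarith [sq_nonneg (u x - 2 * u y)])
    rw [intervalIntegral.integral_add, intervalIntegral.integral_const_mul,
      intervalIntegral.integral_const, intervalIntegral.integral_const] at hav
    rotate_left
    · exact Continuous.intervalIntegrable (by have := hw.continuous; fun_prop) _ _
    · exact Continuous.intervalIntegrable (by fun_prop) _ _
    simp only [smul_eq_mul, sub_zero, zero_add, iteratedDeriv_one, iteratedDeriv_zero] at *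
    nlinarith [sq_nonneg (u x), mul_nonneg (sub_nonneg.2 hC) hn0]
  · have h2 := sq_iteratedDeriv_le hu hper hj1 hj hx
    nlinarith [mul_nonneg (zero_le_one.trans hC) hn0]

/-! ### The estimate for `cos (n (θ + f θ))` -/

lemma abs_iteratedDeriv_id_add_le {k j : ℕ} {f : ℝ → ℝ} (hf : ContDiff ℝ k f) (hj1 : 1 ≤ j)
    (hj : j ≤ k) (x : ℝ) : |iteratedDeriv j (fun θ => θ + f θ) x| ≤ 1 + |iteratedDeriv j f x| := by
  have hfj : ContDiff ℝ j f := hf.of_le (by exact_mod_cast hj)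
  rw [iteratedDeriv_fun_add contDiff_fun_id.contDiffAt hfj.contDiffAt, iteratedDeriv_fun_id]
  refine (abs_add_le _ _).trans ?_
  gcongr
  split_ifs <;> simp_all

lemma HkNormSq_nonneg (k : ℕ) (u : ℝ → ℝ) : 0 ≤ HkNormSq k u :=
  add_nonneg (intervalIntegral.integral_nonneg Real.two_pi_pos.le fun _ _ => sq_nonneg _)
    (intervalIntegral.integral_nonneg Real.two_pi_pos.le fun _ _ => sq_nonneg _)

lemma integral_sq_cos_sub_le {c : ℝ} (hc : 0 < c) (n : ℝ) {f g : ℝ → ℝ} (hf : Continuous f)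
    (hg : Continuous g) :
    ∫ θ in (0:ℝ)..(2 * π), (c * cos (n * (θ + f θ)) - c * cos (n * (θ + g θ))) ^ 2 ≤
      (c * (1 + |n|)) ^ 2 * ∫ θ in (0:ℝ)..(2 * π), (f θ - g θ) ^ 2 := by
  rw [← intervalIntegral.integral_const_mul]
  refine intervalIntegral.integral_mono_on Real.two_pi_pos.le
    (Continuous.intervalIntegrable (by fun_prop) _ _)
    (Continuous.intervalIntegrable (by fun_prop) _ _) fun θ _ => ?_
  have h := Real.abs_cos_sub_cos_le (n * (θ + f θ)) (n * (θ + g θ))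
  rw [← mul_sub, ← mul_pow, sq_le_sq, abs_mul, abs_mul, abs_of_pos hc,
    abs_of_nonneg (by positivity : 0 ≤ c * (1 + |n|)), mul_assoc]
  gcongr
  refine h.trans ?_
  rw [← mul_sub, abs_mul, add_sub_add_left_eq_sub]
  gcongr
  linarith

/-- The estimate for the top-order part of the `H^k` norm, `k ≥ 1`, in squared form. -/
lemma integral_sq_iteratedDeriv_cos_sub_le {k : ℕ} (hk : 1 ≤ k) {R : ℝ} (hR : 0 < R) :
    ∃ L : ℝ, 0 ≤ L ∧ ∀ c : ℝ, 0 < c → ∀ (n : ℝ) (f g : ℝ → ℝ),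
      ContDiff ℝ k f → ContDiff ℝ k g →
      (∀ x, f (x + 2 * π) = f x) → (∀ x, g (x + 2 * π) = g x) →
      HkNormSq k f ≤ R ^ 2 → HkNormSq k g ≤ R ^ 2 →
      ∫ θ in (0:ℝ)..(2 * π), (iteratedDeriv k
        (fun θ => c * cos (n * (θ + f θ)) - c * cos (n * (θ + g θ))) θ) ^ 2 ≤
      L * (c * (1 + |n|) ^ (k + 1)) ^ 2 * HkNormSq k (fun θ => f θ - g θ) := by
  set C : ℝ := (2 * π) ^ (2 * k) with hC
  have hC0 : 0 ≤ C := by have := Real.pi_pos; positivity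
  set B : ℝ := 1 + √C * R with hB
  have hB1 : 1 ≤ B := by rw [hB]; nlinarith [mul_nonneg (Real.sqrt_nonneg C) hR.le]
  set M : ℝ := Fintype.card (OrderedFinpartition k) * ((k + 1) * B ^ k) with hM
  have hM0 : 0 ≤ M := by positivity
  refine ⟨M ^ 2 * (3 * (8 * π * C + C * R ^ 2 + 1)), by have := Real.pi_pos; positivity, ?_⟩
  intro c hc n f g hf hg hfp hgp hfR hgR
  set u : ℝ → ℝ := fun θ => f θ - g θ with hu
  have huC : ContDiff ℝ k u := hf.sub hg
  have hup : ∀ x, u (x + 2 * π) = u x := fun x => by simp only [hu, hfp, hgp]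
  set E := HkNormSq k u with hE
  have hE0 : 0 ≤ E := HkNormSq_nonneg k u
  set δ := √(C * E) with hδ
  have hδ2 : δ ^ 2 = C * E := Real.sq_sqrt (by positivity)
  set N := 1 + |n| with hN
  have hN1 : 1 ≤ N := by rw [hN]; linarith [abs_nonneg n]
  have hbd : ∀ v : ℝ → ℝ, ContDiff ℝ k v → (∀ x, v (x + 2 * π) = v x) → HkNormSq k v ≤ R ^ 2 →
      ∀ x ∈ Set.Icc 0 (2 * π), ∀ j, 1 ≤ j → j < k →
        |iteratedDeriv j (fun θ => θ + v θ) x| ≤ B := by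
    intro v hv hvp hvR x hx j hj1 hj
    refine (abs_iteratedDeriv_id_add_le hv hj1 hj.le x).trans ?_
    rw [hB]
    gcongr
    refine abs_le_of_sq_le_sq ?_ (by positivity)
    rw [mul_pow, Real.sq_sqrt hC0]
    exact (sq_iteratedDeriv_le_HkNormSq hv hvp hj hx).trans (by gcongr)
  have hsub : ∀ j ≤ k, ∀ x, iteratedDeriv j (fun θ => θ + f θ) x
      - iteratedDeriv j (fun θ => θ + g θ) x = iteratedDeriv j u x := by
    intro j hj x
    have hfj : ContDiff ℝ j f := hf.of_le (by exact_mod_cast hj)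
    have hgj : ContDiff ℝ j g := hg.of_le (by exact_mod_cast hj)
    rw [hu, iteratedDeriv_fun_add contDiff_fun_id.contDiffAt hfj.contDiffAt,
      iteratedDeriv_fun_add contDiff_fun_id.contDiffAt hgj.contDiffAt,
      iteratedDeriv_fun_sub hfj.contDiffAt hgj.contDiffAt]
    ring
  have hF : ContDiff ℝ k (fun θ => θ + f θ) := contDiff_id.add hf
  have hG : ContDiff ℝ k (fun θ => θ + g θ) := contDiff_id.add hg
  have hφ : ContDiff ℝ ⊤ (fun y => cos (n * y)) :=
    Real.contDiff_cos.comp (contDiff_const.mul contDiff_id)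
  have hφk : ContDiff ℝ k (fun y => cos (n * y)) :=
    Real.contDiff_cos.comp (contDiff_const.mul contDiff_id)
  have hcF : ContDiff ℝ k (fun θ => cos (n * (θ + f θ))) := hφk.comp hF
  have hcG : ContDiff ℝ k (fun θ => cos (n * (θ + g θ))) := hφk.comp hG
  have hcf := hf.continuous_iteratedDeriv' k
  have hcu := huC.continuous_iteratedDeriv' k
  have hch := ((contDiff_const (c := c)).mul hcF |>.sub
    ((contDiff_const (c := c)).mul hcG)).continuous_iteratedDeriv' k
  have hpt : ∀ x ∈ Set.Icc 0 (2 * π), (iteratedDeriv k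
      (fun θ => c * cos (n * (θ + f θ)) - c * cos (n * (θ + g θ))) x) ^ 2 ≤
      (c * M * N ^ (k + 1)) ^ 2 * 3 * (4 * δ ^ 2 + δ ^ 2 * iteratedDeriv k f x ^ 2
        + iteratedDeriv k u x ^ 2) := by
    intro x hx
    have key := abs_iteratedDeriv_comp_sub_le (x := x) (δ := δ) hk hN1 hB1 hφ
      (abs_iteratedDeriv_cos_mul_le n) hF hG (hbd f hf hfp hfR x hx) (hbd g hg hgp hgR x hx)
      (fun j hj => by
        rw [hsub j hj.le, hδ]
        exact Real.abs_le_sqrt (sq_iteratedDeriv_le_HkNormSq huC hup hj hx))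
    rw [hsub k le_rfl, ← hM] at key
    have hFk := abs_iteratedDeriv_id_add_le hf hk le_rfl x
    have e : iteratedDeriv k (fun θ => c * cos (n * (θ + f θ)) - c * cos (n * (θ + g θ))) x
        = c * (iteratedDeriv k ((fun y => cos (n * y)) ∘ (fun θ => θ + f θ)) x
          - iteratedDeriv k ((fun y => cos (n * y)) ∘ (fun θ => θ + g θ)) x) := by
      rw [iteratedDeriv_fun_sub (contDiff_const.mul hcF).contDiffAt
        (contDiff_const.mul hcG).contDiffAt, iteratedDeriv_const_mul_field,
        iteratedDeriv_const_mul_field, mul_sub]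
      rfl
    set a := |iteratedDeriv k f x| with ha
    set b := |iteratedDeriv k u x| with hb
    have key2 : |iteratedDeriv k (fun θ => c * cos (n * (θ + f θ)) - c * cos (n * (θ + g θ))) x|
        ≤ c * M * N ^ (k + 1) * (2 * δ + δ * a + b) := by
      rw [e, abs_mul, abs_of_pos hc, mul_assoc c, mul_assoc c]
      gcongr
      refine key.trans ?_
      gcongr
      nlinarith [Real.sqrt_nonneg (C * E)]
    rw [← sq_abs]
    calc _ ≤ (c * M * N ^ (k + 1) * (2 * δ + δ * a + b)) ^ 2 := by gcongr
      _ = (c * M * N ^ (k + 1)) ^ 2 * (2 * δ + δ * a + b) ^ 2 := by ring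
      _ ≤ (c * M * N ^ (k + 1)) ^ 2 * (3 * (4 * δ ^ 2 + δ ^ 2 * a ^ 2 + b ^ 2)) := by
        gcongr
        nlinarith [sq_nonneg (2 * δ - δ * a), sq_nonneg (2 * δ - b), sq_nonneg (δ * a - b)]
      _ = _ := by rw [ha, hb, sq_abs, sq_abs]; ring
  refine (intervalIntegral.integral_mono_on Real.two_pi_pos.le
    ((hch.pow 2).intervalIntegrable _ _) (Continuous.intervalIntegrable (by fun_prop) _ _)
    hpt).trans ?_
  have hint : ∫ x in (0:ℝ)..(2 * π), (4 * δ ^ 2 + δ ^ 2 * iteratedDeriv k f x ^ 2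
        + iteratedDeriv k u x ^ 2) ≤ (8 * π * C + C * R ^ 2 + 1) * E := by
    rw [intervalIntegral.integral_add, intervalIntegral.integral_add,
      intervalIntegral.integral_const, intervalIntegral.integral_const_mul, smul_eq_mul, hδ2]
    · have h1 : ∫ x in (0:ℝ)..(2 * π), iteratedDeriv k f x ^ 2 ≤ R ^ 2 := le_trans
        (le_add_of_nonneg_left (intervalIntegral.integral_nonneg Real.two_pi_pos.le
          fun _ _ => sq_nonneg _)) hfR
      have h2 : ∫ x in (0:ℝ)..(2 * π), iteratedDeriv k u x ^ 2 ≤ E :=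
        le_add_of_nonneg_left (intervalIntegral.integral_nonneg Real.two_pi_pos.le
          fun _ _ => sq_nonneg _)
      nlinarith [mul_le_mul_of_nonneg_left h1 (mul_nonneg hC0 hE0)]
    all_goals exact Continuous.intervalIntegrable (by fun_prop) _ _
  rw [intervalIntegral.integral_const_mul]
  calc _ ≤ (c * M * N ^ (k + 1)) ^ 2 * 3 * ((8 * π * C + C * R ^ 2 + 1) * E) := by gcongr
    _ = _ := by ring

/-- The key per-mode estimate in the proof of Proposition 2.8: for fixed `k` and `R > 0` there
is `K > 0` such that for all `c > 0`, `n ∈ ℤ`, and `2π`-periodic `C^k` functions `f, g` with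
`‖f‖_{H^k}, ‖g‖_{H^k} ≤ R`, the function `h(θ) = c cos(n(θ+f(θ))) − c cos(n(θ+g(θ)))`
satisfies `‖h‖_{H^k} ≤ K c (1+|n|)^{k+1} ‖f − g‖_{H^k}`. -/
theorem key_lipschitz_estimate (k : ℕ) (R : ℝ) (hR : 0 < R) :
    ∃ K : ℝ, 0 < K ∧ ∀ (c : ℝ), 0 < c → ∀ (n : ℤ) (f g : ℝ → ℝ),
      ContDiff ℝ (k : ℕ∞) f → ContDiff ℝ (k : ℕ∞) g →
      (∀ x : ℝ, f (x + 2 * Real.pi) = f x) → (∀ x : ℝ, g (x + 2 * Real.pi) = g x) →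
      Real.sqrt (HkNormSq k f) ≤ R → Real.sqrt (HkNormSq k g) ≤ R →
      Real.sqrt (HkNormSq k
          (fun θ : ℝ => c * Real.cos (n * (θ + f θ)) - c * Real.cos (n * (θ + g θ)))) ≤
        K * c * (1 + (|n| : ℝ)) ^ (k + 1) *
          Real.sqrt (HkNormSq k (fun θ : ℝ => f θ - g θ)) := by
  -- For `k = 0` the top-order part coincides with the zeroth-order part.
  obtain ⟨L, hL, hmain⟩ : ∃ L : ℝ, 0 ≤ L ∧ ∀ c : ℝ, 0 < c → ∀ (n : ℝ) (f g : ℝ → ℝ),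
      ContDiff ℝ k f → ContDiff ℝ k g →
      (∀ x, f (x + 2 * π) = f x) → (∀ x, g (x + 2 * π) = g x) →
      HkNormSq k f ≤ R ^ 2 → HkNormSq k g ≤ R ^ 2 →
      ∫ θ in (0:ℝ)..(2 * π), (iteratedDeriv k
        (fun θ => c * cos (n * (θ + f θ)) - c * cos (n * (θ + g θ))) θ) ^ 2 ≤
      L * (c * (1 + |n|) ^ (k + 1)) ^ 2 * HkNormSq k (fun θ => f θ - g θ) := by
    rcases Nat.eq_zero_or_pos k with rfl | hk
    · refine ⟨1, zero_le_one, fun c hc n f g hf hg _ _ _ _ => ?_⟩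
      simp only [iteratedDeriv_zero, zero_add, pow_one, one_mul]
      refine (integral_sq_cos_sub_le hc n hf.continuous hg.continuous).trans ?_
      gcongr
      exact le_add_of_nonneg_right (intervalIntegral.integral_nonneg Real.two_pi_pos.le
        fun _ _ => sq_nonneg _)
    · exact integral_sq_iteratedDeriv_cos_sub_le hk hR
  refine ⟨√(1 + L), by positivity, fun c hc n f g hf hg hfp hgp hfR hgR => ?_⟩
  have hf' : ContDiff ℝ k f := by exact_mod_cast hf
  have hg' : ContDiff ℝ k g := by exact_mod_cast hg
  have hk := hmain c hc n f g hf' hg' hfp hgp ((Real.sqrt_le_left hR.le).1 hfR)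
    ((Real.sqrt_le_left hR.le).1 hgR)
  have h0 := integral_sq_cos_sub_le hc n hf'.continuous hg'.continuous
  set E := HkNormSq k (fun θ => f θ - g θ) with hE
  have hE0 : 0 ≤ E := HkNormSq_nonneg k _
  have hN1 : 1 ≤ 1 + |(n : ℝ)| := by linarith [abs_nonneg (n : ℝ)]
  have h0' : (c * (1 + |(n : ℝ)|)) ^ 2 * ∫ θ in (0:ℝ)..(2 * π), (f θ - g θ) ^ 2
      ≤ (c * (1 + |(n : ℝ)|) ^ (k + 1)) ^ 2 * E := by
    gcongr
    · exact intervalIntegral.integral_nonneg Real.two_pi_pos.le fun _ _ => sq_nonneg _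
    · exact le_self_pow₀ hN1 (by omega)
    · exact le_add_of_nonneg_right (intervalIntegral.integral_nonneg Real.two_pi_pos.le
        fun _ _ => sq_nonneg _)
  rw [Real.sqrt_le_left (by positivity)]
  rw [mul_pow _ √E, Real.sq_sqrt hE0, mul_assoc (√(1 + L)), mul_pow, Real.sq_sqrt (by positivity)]
  unfold HkNormSq
  linarith
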